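/- Let ν be a finite nonzero measure on [0,∞) with total mass a = ν([0,∞)) ∈ (0,∞) (viewed as a measure on ℝ supported on [0,∞)), and let μ be a probability measure on ℝ whose characteristic function satisfies φ(u) = exp( ∫_{[0,∞)} k(u,y) dν(y) ) for all real u, where k(u,y) = (e^{iuy} − 1)/y for y > 0 and k(u,0) = iu. Then μ([0,∞)) = 1, the mean of μ equals a, and the size-biased measure μ* satisfies μ* = μ ∗ (ν/a), where ν/a is the probability measure obtained by normalizing ν. -/

import Mathlib

open MeasureTheory

/-- The size-biased measure of `μ`: `dμ*(x) = (x / ∫ y dμ(y)) dμ(x)`. -/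
noncomputable def sizeBiased (μ : Measure ℝ) : Measure ℝ :=
  μ.withDensity (fun x => ENNReal.ofReal (x / ∫ y, y ∂μ))

/-- Convolution of two measures on ℝ: pushforward of the product under addition. -/
noncomputable def mconv (μ ν : Measure ℝ) : Measure ℝ :=
  Measure.map (fun p : ℝ × ℝ => p.1 + p.2) (μ.prod ν)

/-- The characteristic function `φ(u) = ∫ e^{iux} dμ(x)`. -/
noncomputable def charFn (μ : Measure ℝ) (u : ℝ) : ℂ :=
  ∫ x, Complex.exp (Complex.I * u * x) ∂μ

/-- The Lévy kernel `k(u,y) = (e^{iuy} - 1)/y` for `y ≠ 0`, with `k(u,0) = iu`. -/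
noncomputable def levyKernel (u y : ℝ) : ℂ :=
  if y = 0 then Complex.I * u else (Complex.exp (Complex.I * u * y) - 1) / y

/-!
Differentiating `φ_μ = exp (∫ k(·, y) dν(y))` gives `φ_μ' = i φ_μ φ_ν`, which formally says that the
signed measure `x μ(dx)` equals `μ ∗ ν`. Once this is known everything follows at once: `μ ∗ ν` is
positive, so `μ` lives on `[0, ∞)`; its total mass is that of `ν`, so the mean of `μ` is `a`; and
dividing by `a` gives the size-bias identity.

Nothing is known about the moments of `μ` a priori, so the differential equation is first convolved
with a standard Gaussian law. On the side of measures this multiplies by `e^{-x²/2}`, after which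
`x` is integrable and differentiation under the integral sign is legitimate; uniqueness of
characteristic functions then applies, and the positive factor `e^{-x²/2}` is divided out.
-/

section CharFun

open Complex
open scoped RealInnerProductSpace

section InnerProductSpace

variable {E : Type*} [NormedAddCommGroup E] [InnerProductSpace ℝ E] [MeasurableSpace E]

lemma charFun_withDensity_ofReal {μ : Measure E} {f : E → ℝ} (hf : Measurable f) (t : E) :
    charFun (μ.withDensity fun x ↦ ENNReal.ofReal (f x)) t =
      ∫ x, ↑(max (f x) 0) * cexp (⟪x, t⟫ * I) ∂μ := by
  rw [charFun_apply, integral_withDensity_eq_integral_toReal_smul (by fun_prop)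
    (ae_of_all _ fun _ ↦ ENNReal.ofReal_lt_top)]
  simp only [ENNReal.toReal_ofReal', real_smul]

variable [BorelSpace E] [SecondCountableTopology E]

lemma integrable_cexp_inner_mul_I (μ : Measure E) [IsFiniteMeasure μ] (t : E) :
    Integrable (fun x ↦ cexp (⟪x, t⟫ * I)) μ :=
  .of_bound (by fun_prop) 1 (ae_of_all _ fun _ ↦ (norm_exp_ofReal_mul_I _).le)

lemma charFun_add_measure (μ ν : Measure E) [IsFiniteMeasure μ] [IsFiniteMeasure ν] (t : E) :
    charFun (μ + ν) t = charFun μ t + charFun ν t :=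
  integral_add_measure (integrable_cexp_inner_mul_I μ t) (integrable_cexp_inner_mul_I ν t)

lemma integrable_ofReal_mul_cexp_inner {μ : Measure E} {f : E → ℝ} (hf : Integrable f μ) (t : E) :
    Integrable (fun x ↦ (f x : ℂ) * cexp (⟪x, t⟫ * I)) μ :=
  hf.ofReal.mul_bdd (c := 1) (by fun_prop) (ae_of_all _ fun _ ↦ (norm_exp_ofReal_mul_I _).le)

lemma charFun_withDensity_ofReal_sub_neg {μ : Measure E} {f : E → ℝ} (hfm : Measurable f)
    (hf : Integrable f μ) (t : E) :
    charFun (μ.withDensity fun x ↦ ENNReal.ofReal (f x)) t -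
        charFun (μ.withDensity fun x ↦ ENNReal.ofReal (-f x)) t =
      ∫ x, f x * cexp (⟪x, t⟫ * I) ∂μ := by
  rw [charFun_withDensity_ofReal hfm, charFun_withDensity_ofReal (f := fun x ↦ -f x) hfm.neg,
    ← integral_sub (integrable_ofReal_mul_cexp_inner hf.pos_part t)
      (integrable_ofReal_mul_cexp_inner hf.neg_part t)]
  refine integral_congr_ae (ae_of_all _ fun x ↦ ?_)
  simp only [← sub_mul, ← ofReal_sub, max_zero_sub_max_neg_zero_eq_self]

lemma ae_nonneg_and_withDensity_eq_of_integral_mul_cexp_eq_charFun [CompleteSpace E]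
    {μ ρ : Measure E} [IsFiniteMeasure ρ] {f : E → ℝ} (hfm : Measurable f) (hf : Integrable f μ)
    (h : ∀ t, ∫ x, f x * cexp (⟪x, t⟫ * I) ∂μ = charFun ρ t) :
    (∀ᵐ x ∂μ, 0 ≤ f x) ∧ μ.withDensity (fun x ↦ ENNReal.ofReal (f x)) = ρ := by
  set P := μ.withDensity fun x ↦ ENNReal.ofReal (f x)
  set N := μ.withDensity fun x ↦ ENNReal.ofReal (-f x)
  have : IsFiniteMeasure P := isFiniteMeasure_withDensity_ofReal hf.2
  have : IsFiniteMeasure N := isFiniteMeasure_withDensity_ofReal hf.neg.2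
  have hP : P = ρ + N := Measure.ext_of_charFun <| funext fun t ↦ by
    rw [charFun_add_measure, ← h, ← charFun_withDensity_ofReal_sub_neg hfm hf, sub_add_cancel]
  have hN : N = 0 :=
    Measure.eq_zero_of_absolutelyContinuous_of_mutuallySingular
      (hP ▸ Measure.le_add_left le_rfl : N ≤ P).absolutelyContinuous
      (withDensity_ofReal_mutuallySingular hfm).symm
  refine ⟨?_, by rw [hP, hN, add_zero]⟩
  filter_upwards [(withDensity_eq_zero_iff (by fun_prop)).1 hN] with x hx
  simpa using hx

lemma integral_charFun_add (μ γ : Measure E) [IsFiniteMeasure μ] [IsFiniteMeasure γ] (t : E) :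
    ∫ s, charFun μ (t + s) ∂γ = ∫ x, cexp (⟪x, t⟫ * I) * charFun γ x ∂μ := by
  simp only [charFun_apply]
  rw [integral_integral_swap]
  · simp only [← integral_const_mul, inner_add_right, ofReal_add, add_mul, exp_add,
      real_inner_comm]
  · exact .of_bound (by fun_prop) 1 (ae_of_all _ fun _ ↦ (norm_exp_ofReal_mul_I _).le)

end InnerProductSpace

lemma hasDerivAt_charFun {μ : Measure ℝ} [IsFiniteMeasure μ] (hμ : Integrable (fun x ↦ x) μ)
    (u : ℝ) : HasDerivAt (charFun μ) (I * ∫ x, x * cexp (u * x * I) ∂μ) u := by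
  have hL : MemLp id ((1 : ℕ) : ENNReal) μ := by simpa using! memLp_one_iff_integrable.2 hμ
  have hderiv := iteratedDeriv_charFun (t := u) hL
  simp only [iteratedDeriv_one, pow_one] at hderiv
  exact hderiv ▸ ((contDiff_charFun hL).differentiable (by simp) u).hasDerivAt

lemma hasDerivAt_integral_charFun_add {μ ρ γ : Measure ℝ} [IsFiniteMeasure μ] [IsFiniteMeasure ρ]
    [IsFiniteMeasure γ] (h : ∀ u, HasDerivAt (charFun μ) (I * charFun ρ u) u) (u : ℝ) :
    HasDerivAt (fun v ↦ ∫ s, charFun μ (v + s) ∂γ) (I * ∫ s, charFun ρ (u + s) ∂γ) u := by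
  rw [← integral_const_mul]
  refine (hasDerivAt_integral_of_dominated_loc_of_deriv_le
    (F' := fun v s ↦ I * charFun ρ (v + s)) (bound := fun _ ↦ ρ.real Set.univ)
    Filter.univ_mem (.of_forall fun v ↦ by fun_prop) ?_ (by fun_prop)
    (ae_of_all _ fun s v _ ↦ ?_) (integrable_const _)
    (ae_of_all _ fun s v _ ↦ (h (v + s)).comp_add_const v s)).2
  · exact .of_bound (by fun_prop) (μ.real Set.univ) (ae_of_all _ fun s ↦ norm_charFun_le _)
  · simpa using norm_charFun_le (μ := ρ) (v + s)

/-- The measure `e^{-x²/2} μ(dx)`. For finite `μ` it has moments of all orders, and its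
characteristic function is that of `μ` convolved with the standard Gaussian law. -/
noncomputable def gaussianDamp (μ : Measure ℝ) : Measure ℝ :=
  μ.withDensity fun x ↦ ENNReal.ofReal (Real.exp (-x ^ 2 / 2))

instance isFiniteMeasure_gaussianDamp (μ : Measure ℝ) [IsFiniteMeasure μ] :
    IsFiniteMeasure (gaussianDamp μ) := by
  refine isFiniteMeasure_withDensity_ofReal
    (Integrable.of_bound (by fun_prop) 1 (ae_of_all _ fun x ↦ ?_)).2
  rw [Real.norm_of_nonneg (by positivity), Real.exp_le_one_iff]
  linarith [sq_nonneg x]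

lemma absolutelyContinuous_gaussianDamp (μ : Measure ℝ) : μ ≪ gaussianDamp μ :=
  withDensity_absolutelyContinuous' (by fun_prop) (ae_of_all _ fun x ↦ by simp [Real.exp_pos])

lemma gaussianDamp_injective : Function.Injective gaussianDamp :=
  Function.LeftInverse.injective
    (g := fun μ ↦ μ.withDensity fun x ↦ (ENNReal.ofReal (Real.exp (-x ^ 2 / 2)))⁻¹) fun _ ↦
    withDensity_inv_same (by fun_prop) (ae_of_all _ fun x ↦ by simp [Real.exp_pos])
      (ae_of_all _ fun _ ↦ ENNReal.ofReal_ne_top)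

lemma gaussianDamp_withDensity (μ : Measure ℝ) {f : ℝ → ENNReal} (hf : Measurable f) :
    gaussianDamp (μ.withDensity f) = (gaussianDamp μ).withDensity f := by
  rw [gaussianDamp, gaussianDamp, ← withDensity_mul _ hf (by fun_prop), mul_comm,
    withDensity_mul _ (by fun_prop) hf]

lemma abs_mul_exp_neg_sq_div_two_le_one (x : ℝ) : |x| * Real.exp (-x ^ 2 / 2) ≤ 1 := by
  rw [neg_div, Real.exp_neg, ← div_eq_mul_inv, div_le_one (Real.exp_pos _)]
  calc |x| ≤ x ^ 2 / 2 + 1 := by nlinarith [sq_nonneg (|x| - 1), sq_abs x]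
    _ ≤ Real.exp (x ^ 2 / 2) := Real.add_one_le_exp _

lemma integrable_id_gaussianDamp (μ : Measure ℝ) [IsFiniteMeasure μ] :
    Integrable (fun x ↦ x) (gaussianDamp μ) := by
  rw [gaussianDamp, integrable_withDensity_iff (by fun_prop)
    (ae_of_all _ fun _ ↦ ENNReal.ofReal_lt_top)]
  refine .of_bound (by fun_prop) 1 (ae_of_all _ fun x ↦ ?_)
  simpa [Real.exp_nonneg] using abs_mul_exp_neg_sq_div_two_le_one x

lemma charFun_gaussianDamp (μ : Measure ℝ) [IsFiniteMeasure μ] (u : ℝ) :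
    charFun (gaussianDamp μ) u = ∫ s, charFun μ (u + s) ∂(ProbabilityTheory.gaussianReal 0 1) := by
  rw [integral_charFun_add, gaussianDamp, charFun_withDensity_ofReal (by fun_prop)]
  refine integral_congr_ae (ae_of_all _ fun x ↦ ?_)
  simp [ProbabilityTheory.charFun_gaussianReal, Real.exp_nonneg, mul_comm, neg_div]

lemma ae_nonneg_and_withDensity_eq_of_hasDerivAt_charFun_of_integrable {μ ρ : Measure ℝ}
    [IsFiniteMeasure μ] [IsFiniteMeasure ρ] (hμ : Integrable (fun x ↦ x) μ)
    (h : ∀ u, HasDerivAt (charFun μ) (I * charFun ρ u) u) :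
    (∀ᵐ x ∂μ, 0 ≤ x) ∧ μ.withDensity ENNReal.ofReal = ρ := by
  refine ae_nonneg_and_withDensity_eq_of_integral_mul_cexp_eq_charFun measurable_id hμ
    fun u ↦ ?_
  simpa using mul_left_cancel₀ I_ne_zero ((hasDerivAt_charFun hμ u).unique (h u))

lemma ae_nonneg_and_withDensity_eq_of_hasDerivAt_charFun {μ ρ : Measure ℝ}
    [IsFiniteMeasure μ] [IsFiniteMeasure ρ]
    (h : ∀ u, HasDerivAt (charFun μ) (I * charFun ρ u) u) :
    (∀ᵐ x ∂μ, 0 ≤ x) ∧ μ.withDensity ENNReal.ofReal = ρ := by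
  have hdamp (u : ℝ) :
      HasDerivAt (charFun (gaussianDamp μ)) (I * charFun (gaussianDamp ρ) u) u := by
    rw [funext (charFun_gaussianDamp μ), charFun_gaussianDamp ρ]
    exact hasDerivAt_integral_charFun_add h u
  obtain ⟨hnonneg, heq⟩ := ae_nonneg_and_withDensity_eq_of_hasDerivAt_charFun_of_integrable
    (integrable_id_gaussianDamp μ) hdamp
  refine ⟨(absolutelyContinuous_gaussianDamp μ).ae_le hnonneg, gaussianDamp_injective ?_⟩
  rw [gaussianDamp_withDensity μ ENNReal.measurable_ofReal, heq]

end CharFun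

section LevyKernel

open Complex

lemma norm_levyKernel_le (u y : ℝ) : ‖levyKernel u y‖ ≤ |u| := by
  rcases eq_or_ne y 0 with rfl | hy
  · simp [levyKernel]
  · rw [levyKernel, if_neg hy, norm_div, norm_real, div_le_iff₀ (norm_pos_iff.2 hy)]
    simpa [mul_assoc] using Real.norm_exp_I_mul_ofReal_sub_one_le (x := u * y)

lemma measurable_levyKernel (u : ℝ) : Measurable (levyKernel u) :=
  .ite (measurableSet_singleton 0) (by fun_prop) (by fun_prop)

lemma integrable_levyKernel (ν : Measure ℝ) [IsFiniteMeasure ν] (u : ℝ) :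
    Integrable (levyKernel u) ν :=
  .of_bound (measurable_levyKernel u).aestronglyMeasurable |u|
    (ae_of_all _ fun y ↦ norm_levyKernel_le u y)

lemma hasDerivAt_levyKernel (u y : ℝ) :
    HasDerivAt (fun v ↦ levyKernel v y) (I * cexp (u * y * I)) u := by
  have hI : HasDerivAt (fun v : ℝ ↦ I * (v : ℂ)) I u := by
    simpa using (hasDerivAt_id u).ofReal_comp.const_mul I
  rcases eq_or_ne y 0 with rfl | hy
  · simpa [levyKernel] using hI
  · have hy' : (y : ℂ) ≠ 0 := ofReal_ne_zero.2 hy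
    simp only [levyKernel, if_neg hy]
    refine (((hI.mul_const (y : ℂ)).cexp.sub_const 1).div_const (y : ℂ)).congr_deriv ?_
    rw [div_eq_iff hy']
    ring_nf

lemma hasDerivAt_integral_levyKernel (ν : Measure ℝ) [IsFiniteMeasure ν] (u : ℝ) :
    HasDerivAt (fun v ↦ ∫ y, levyKernel v y ∂ν) (I * charFun ν u) u := by
  rw [charFun_apply_real, ← integral_const_mul]
  refine (hasDerivAt_integral_of_dominated_loc_of_deriv_le
    (F' := fun v y : ℝ ↦ I * cexp (v * y * I)) (bound := fun _ ↦ 1) Filter.univ_mem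
    (.of_forall fun v ↦ (measurable_levyKernel v).aestronglyMeasurable)
    (integrable_levyKernel ν u) (by fun_prop) (ae_of_all _ fun y v _ ↦ ?_) (integrable_const _)
    (ae_of_all _ fun y v _ ↦ hasDerivAt_levyKernel v y)).2
  rw [norm_mul, norm_I, one_mul, ← ofReal_mul, norm_exp_ofReal_mul_I]

lemma hasDerivAt_charFun_of_eq_cexp_integral_levyKernel {μ ν : Measure ℝ} [IsFiniteMeasure μ]
    [IsFiniteMeasure ν] (h : ∀ u, charFun μ u = cexp (∫ y, levyKernel u y ∂ν)) (u : ℝ) :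
    HasDerivAt (charFun μ) (I * charFun (μ ∗ ν) u) u := by
  have hexp := (hasDerivAt_integral_levyKernel ν u).cexp
  rw [← funext h, ← h] at hexp
  rwa [charFun_conv, mul_left_comm]

end LevyKernel

section SizeBiased

lemma charFn_eq_charFun (μ : Measure ℝ) : charFn μ = charFun μ := by
  ext u
  simp only [charFn, charFun_apply_real, mul_comm, mul_left_comm]

lemma conv_apply_univ {M : Type*} [AddMonoid M] [MeasurableSpace M] [MeasurableAdd₂ M]
    (μ ν : Measure M) [SFinite ν] : (μ ∗ ν) Set.univ = μ Set.univ * ν Set.univ := by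
  rw [Measure.conv, Measure.map_apply measurable_add .univ, Set.preimage_univ,
    ← Set.univ_prod_univ, Measure.prod_prod]

lemma integral_id_eq_real_withDensity {μ : Measure ℝ} (hμ : ∀ᵐ x ∂μ, 0 ≤ x) :
    ∫ x, x ∂μ = (μ.withDensity ENNReal.ofReal).real Set.univ := by
  rw [integral_eq_lintegral_of_nonneg_ae hμ (by fun_prop), measureReal_def,
    withDensity_apply _ .univ, Measure.restrict_univ]

lemma sizeBiased_eq_smul_withDensity {μ : Measure ℝ} (hμ : 0 < ∫ x, x ∂μ) :
    sizeBiased μ = (ENNReal.ofReal (∫ x, x ∂μ))⁻¹ • μ.withDensity ENNReal.ofReal := by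
  rw [sizeBiased, ← withDensity_smul _ ENNReal.measurable_ofReal]
  congr 1 with x
  rw [ENNReal.ofReal_div_of_pos hμ, ENNReal.div_eq_inv_mul, Pi.smul_apply, smul_eq_mul]

theorem sizeBias_of_levy_representation_general
    (ν : Measure ℝ) [IsFiniteMeasure ν] (a : ℝ) (ha : 0 < a)
    (haval : ν Set.univ = ENNReal.ofReal a) (μ : Measure ℝ) [IsProbabilityMeasure μ]
    (hchar : ∀ u : ℝ, charFn μ u = Complex.exp (∫ y, levyKernel u y ∂ν)) :
    μ (Set.Ici 0) = 1 ∧ (∫ x, x ∂μ) = a ∧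
      sizeBiased μ = mconv μ ((ENNReal.ofReal a)⁻¹ • ν) := by
  rw [charFn_eq_charFun] at hchar
  obtain ⟨hnonneg, hconv⟩ := ae_nonneg_and_withDensity_eq_of_hasDerivAt_charFun
    (hasDerivAt_charFun_of_eq_cexp_integral_levyKernel hchar)
  have hmean : ∫ x, x ∂μ = a := by
    rw [integral_id_eq_real_withDensity hnonneg, hconv, measureReal_def, conv_apply_univ,
      measure_univ, one_mul, haval, ENNReal.toReal_ofReal ha.le]
  refine ⟨(mem_ae_iff_prob_eq_one measurableSet_Ici).1 hnonneg, hmean, ?_⟩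
  rw [sizeBiased_eq_smul_withDensity (hmean ▸ ha), hmean, hconv]
  exact (Measure.conv_smul_right μ ν _).symm

end SizeBiased

/-- If `ν` is a finite nonzero measure supported on `[0,∞)` with total mass `a ∈ (0,∞)`,
and `μ` is a probability measure with characteristic function
`φ(u) = exp(∫_{[0,∞)} k(u,y) dν(y))`, then `μ` is supported on `[0,∞)`, has mean `a`,
and its size-biased measure is `μ ∗ (ν/a)`. -/
theorem sizeBias_of_levy_representation
    (ν : Measure ℝ) [IsFiniteMeasure ν] (hνsupp : ν (Set.Iio 0) = 0)
    (a : ℝ) (ha : 0 < a) (haval : ν (Set.Ici 0) = ENNReal.ofReal a)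
    (μ : Measure ℝ) [IsProbabilityMeasure μ]
    (hchar : ∀ u : ℝ, charFn μ u =
        Complex.exp (∫ y in Set.Ici (0 : ℝ), levyKernel u y ∂ν)) :
    μ (Set.Ici 0) = 1 ∧ (∫ x, x ∂μ) = a ∧
      sizeBiased μ = mconv μ ((ENNReal.ofReal a)⁻¹ • ν) := by
  have hν : ν.restrict (Set.Ici 0) = ν :=
    Measure.restrict_eq_self_of_ae_mem (by simpa [ae_iff, Set.Iio] using hνsupp)
  simpa only [hν] using sizeBias_of_levy_representation_general (ν.restrict (Set.Ici 0)) a ha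
    (by simpa using haval) μ hchar
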